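/- arXiv:1802.05702 — 6 statements merged into one kernel-verified Lean document; each statement's English description precedes it below -/
import Mathlib

section
/- Let A be a commutative ring and f₁,…,fₙ ∈ A a regular sequence. Regard A as an algebra over the polynomial ring P = ℤ[T₁,…,Tₙ] via the ring homomorphism sending Tᵢ to fᵢ. Then Torᵢ^P(A, P/(T₁,…,Tₙ)) = 0 for every i > 0. (Equivalently: the Koszul complex of a regular sequence is acyclic in positive degrees, i.e. the derived quotient A⫽(f₁,…,fₙ) agrees with the classical quotient A/(f₁,…,fₙ).) -/
open CategoryTheory CategoryTheory.Limits

universe u v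

namespace CategoryTheory

section Abelian

variable {C : Type*} [Category* C] [Abelian C]

namespace ProjectiveResolution

variable {Y : C} (P : ProjectiveResolution Y)

/-- The short complex `P_{j+1} / im d_{j+2} ⟶ P_j ⟶ P_j / im d_{j+1}` attached to a
projective resolution. -/
noncomputable abbrev syzygyShortComplex (j : ℕ) : ShortComplex C :=
  ShortComplex.mk
    (cokernel.desc (P.complex.d (j + 2) (j + 1)) (P.complex.d (j + 1) j) (by simp))
    (cokernel.π (P.complex.d (j + 1) j))
    (by rw [← cancel_epi (cokernel.π (P.complex.d (j + 2) (j + 1)))]; simp)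

lemma syzygyShortComplex_shortExact (j : ℕ) : (P.syzygyShortComplex j).ShortExact where
  mono_f := (ShortComplex.exact_iff_mono_cokernel_desc _).1 (P.exact_succ j)
  epi_g := by dsimp; infer_instance
  exact := by
    let φ : ShortComplex.mk _ _ (cokernel.condition (P.complex.d (j + 1) j)) ⟶
        P.syzygyShortComplex j :=
      { τ₁ := cokernel.π _
        τ₂ := 𝟙 _
        τ₃ := 𝟙 _ }
    have : Epi φ.τ₁ := by dsimp [φ]; infer_instance
    have : IsIso φ.τ₂ := by dsimp [φ]; infer_instance
    have : Mono φ.τ₃ := by dsimp [φ]; infer_instance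
    exact (ShortComplex.exact_iff_of_epi_of_isIso_of_mono φ).1 (ShortComplex.exact_cokernel _)

lemma hasProjectiveDimensionLT_cokernel (j m : ℕ) (h : HasProjectiveDimensionLT Y (j + m + 1)) :
    HasProjectiveDimensionLT (cokernel (P.complex.d (j + 1) j)) (m + 1) := by
  induction j generalizing m with
  | zero =>
    rw [zero_add] at h
    have : HasProjectiveDimensionLT P.cokernelCofork.pt (m + 1) := h
    exact hasProjectiveDimensionLT_of_iso
      (IsColimit.coconePointUniqueUpToIso P.isColimitCokernelCofork
        (cokernelIsCokernel (P.complex.d 1 0))) (m + 1)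
  | succ j ih =>
    refine (P.syzygyShortComplex_shortExact j).hasProjectiveDimensionLT_X₁ (m + 1)
      (hasProjectiveDimensionLT_of_ge _ 1 _ (by lia)) (ih (m + 1) ?_)
    rwa [show j + (m + 1) + 1 = j + 1 + m + 1 by lia]

end ProjectiveResolution

variable {D : Type*} [Category* D] [Abelian D]

/-- A right exact functor preserves the exactness of a short complex `X₁ ⟶ X₂ ⟶ X₃` such that
`coker (X₁ ⟶ X₂) ⟶ X₃` is a split monomorphism. -/
lemma ShortComplex.map_exact_of_splitMono_cokernel_desc (S : ShortComplex C) (F : C ⥤ D)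
    [F.Additive] [PreservesFiniteColimits F] (s : SplitMono (cokernel.desc S.f S.g S.zero)) :
    (S.map F).Exact := by
  let T := ShortComplex.mk _ _ (cokernel.condition S.f)
  have hT : (T.map F).Exact :=
    (ShortComplex.exact_cokernel _).map_of_epi_of_preservesCokernel F
      (by dsimp [T]; infer_instance) inferInstance
  let φ : T.map F ⟶ S.map F :=
    { τ₁ := 𝟙 (F.obj S.X₁)
      τ₂ := 𝟙 (F.obj S.X₂)
      τ₃ := F.map (cokernel.desc S.f S.g S.zero)
      comm₁₂ := (Category.id_comp _).trans (Category.comp_id _).symm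
      comm₂₃ := (Category.id_comp _).trans
        ((congrArg F.map (cokernel.π_desc S.f S.g S.zero).symm).trans (F.map_comp _ _)) }
  have : Epi φ.τ₁ := inferInstanceAs (Epi (𝟙 (F.obj S.X₁)))
  have : IsIso φ.τ₂ := inferInstanceAs (IsIso (𝟙 (F.obj S.X₂)))
  have : Mono φ.τ₃ := (s.map F).mono
  exact (ShortComplex.exact_iff_of_epi_of_isIso_of_mono φ).1 hT

lemma Functor.isZero_leftDerived_obj_of_hasProjectiveDimensionLT [HasProjectiveResolutions C]
    (F : C ⥤ D) [F.Additive] [PreservesFiniteColimits F] (Y : C) (n : ℕ)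
    [HasProjectiveDimensionLT Y (n + 1)] :
    IsZero ((F.leftDerived (n + 1)).obj Y) := by
  let P := projectiveResolution Y
  have hproj : HasProjectiveDimensionLT (cokernel (P.complex.d (n + 1) n)) (0 + 1) :=
    P.hasProjectiveDimensionLT_cokernel n 0 (by simpa)
  have hX₃ : Projective (P.syzygyShortComplex n).X₃ :=
    projective_iff_hasProjectiveDimensionLT_one.2 hproj
  let s := (P.syzygyShortComplex_shortExact n).splittingOfProjective
  refine IsZero.of_iso ?_ (P.isoLeftDerivedObj F (n + 1))
  refine (HomologicalComplex.exactAt_iff_isZero_homology _ _).1 ?_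
  rw [HomologicalComplex.exactAt_iff' _ (n + 2) (n + 1) n (by simp) (by simp)]
  exact (P.complex.sc' (n + 2) (n + 1) n).map_exact_of_splitMono_cokernel_desc F s.splitMono_f

end Abelian

end CategoryTheory

section RegularSequence

open RingTheory.Sequence

/-- Dividing out a weakly regular sequence raises the projective dimension by at most its
length. -/
lemma ModuleCat.hasProjectiveDimensionLT_quotient_of_isWeaklyRegular {R : Type u} [CommRing R]
    [Small.{v} R] (M : ModuleCat.{v} R) (rs : List R) (h : IsWeaklyRegular M rs) (n : ℕ)
    [HasProjectiveDimensionLT M (n + 1)] :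
    HasProjectiveDimensionLT (ModuleCat.of R (M ⧸ Ideal.ofList rs • (⊤ : Submodule R M)))
      (n + rs.length + 1) := by
  induction rs generalizing M n with
  | nil =>
    rw [Ideal.ofList_nil, Submodule.bot_smul]
    exact hasProjectiveDimensionLT_of_iso (Submodule.quotEquivOfEqBot ⊥ rfl).toModuleIso.symm _
  | cons r rs ih =>
    rw [isWeaklyRegular_cons_iff] at h
    have hr : HasProjectiveDimensionLT (ModuleCat.of R (QuotSMulTop r M)) (n + 1 + 1) :=
      h.1.smulShortComplex_shortExact.hasProjectiveDimensionLT_X₃ (n + 1) ‹_›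
        (hasProjectiveDimensionLT_of_ge M (n + 1) (n + 2) (by lia))
    have := ih (ModuleCat.of R (QuotSMulTop r M)) h.2 (n + 1)
    rw [List.length_cons, show n + (rs.length + 1) + 1 = n + 1 + rs.length + 1 by lia]
    exact hasProjectiveDimensionLT_of_iso
      (Submodule.quotOfListConsSMulTopEquivQuotSMulTopInner M r rs).toModuleIso.symm _

section Tor

open MonoidalCategory

variable {R : Type u} [CommRing R]

lemma ModuleCat.shortExact_map_tensorRight_of_projective {S : ShortComplex (ModuleCat.{u} R)}
    (hS : S.ShortExact) (X : ModuleCat.{u} R) [Projective X] :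
    (S.map (tensorRight X)).ShortExact := by
  have : Module.Projective R X := (IsProjective.iff_projective X).2 inferInstance
  have : PreservesFiniteColimits (tensorRight X) :=
    preservesFiniteColimits_of_natIso (BraidedCategory.tensorLeftIsoTensorRight X)
  exact hS.map_of_exact (tensorRight X)

/-- The short complex `X₁ ⊗ K ⟶ X₂ ⊗ K ⟶ X₃ ⊗ K` of chain complexes obtained from a short complex
`X₁ ⟶ X₂ ⟶ X₃` of modules and a chain complex `K`. -/
noncomputable abbrev ModuleCat.tensorComplexShortComplex (S : ShortComplex (ModuleCat.{u} R))
    (K : ChainComplex (ModuleCat.{u} R) ℕ) : ShortComplex (ChainComplex (ModuleCat.{u} R) ℕ) :=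
  ShortComplex.mk
    ((NatTrans.mapHomologicalComplex ((tensoringLeft _).map S.f) _).app K)
    ((NatTrans.mapHomologicalComplex ((tensoringLeft _).map S.g) _).app K)
    (by
      ext1 j
      exact (MonoidalCategory.comp_whiskerRight S.f S.g (K.X j)).symm.trans
        ((congrArg (· ▷ K.X j) S.zero).trans (MonoidalPreadditive.zero_whiskerRight ..)))

lemma ModuleCat.tensorComplexShortComplex_shortExact {S : ShortComplex (ModuleCat.{u} R)}
    (hS : S.ShortExact) (K : ChainComplex (ModuleCat.{u} R) ℕ) [∀ j, Projective (K.X j)] :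
    (tensorComplexShortComplex S K).ShortExact :=
  HomologicalComplex.shortExact_of_degreewise_shortExact _ fun j =>
    shortExact_map_tensorRight_of_projective hS (K.X j)

/-- If `r` annihilates `Y` and `P` is a projective resolution of `Y`, then `r` acts as zero on the
homology of `X ⊗ P`. -/
lemma ModuleCat.homologyMap_tensor_smul_eq_zero (X Y : ModuleCat.{u} R) (r : R)
    (hr : ∀ y : Y, r • y = 0) (P : ProjectiveResolution Y) (i : ℕ) :
    HomologicalComplex.homologyMap
      ((NatTrans.mapHomologicalComplex ((tensoringLeft _).map (r • 𝟙 X)) _).app P.complex) i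
        = 0 := by
  have hπ : (r • 𝟙 P.complex) ≫ P.π = 0 := by
    ext1
    ext x
    rw [Linear.smul_comp, Category.id_comp]
    exact hr (P.π.f 0 x)
  have h := ((((tensoringLeft _).obj X).mapHomotopy
    (ProjectiveResolution.liftHomotopyZero _ hπ)).homologyMap_eq i)
  rw [Functor.map_zero, HomologicalComplex.homologyMap_zero] at h
  rw [← h]
  congr 1
  ext1 j
  simp
  rfl

lemma ModuleCat.isZero_Tor_of_isZero_Tor_quotSMulTop (X Y : ModuleCat.{u} R) (r : R)
    (hX : IsSMulRegular X r) (hr : ∀ y : Y, r • y = 0) (i : ℕ)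
    (h : IsZero (((Tor (ModuleCat.{u} R) (i + 1)).obj (ModuleCat.of R (QuotSMulTop r X))).obj Y)) :
    IsZero (((Tor (ModuleCat.{u} R) i).obj X).obj Y) := by
  let P := CategoryTheory.projectiveResolution Y
  have hS := tensorComplexShortComplex_shortExact hX.smulShortComplex_shortExact P.complex
  have hi : (ComplexShape.down ℕ).Rel (i + 1) i := rfl
  refine IsZero.of_iso ?_ (P.isoLeftDerivedObj _ i)
  refine (hS.homology_exact₁ (i + 1) i hi).isZero_X₂ ?_ ?_
  · exact (h.of_iso (P.isoLeftDerivedObj _ (i + 1)).symm).eq_of_src _ _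
  · exact homologyMap_tensor_smul_eq_zero X Y r hr P i

/-- If `rs` is weakly regular on `X` and annihilates `Y`, and `Y` has projective dimension at most
`n`, then `Tor i X Y` vanishes for `i > n - rs.length`. -/
lemma ModuleCat.isZero_Tor_of_isWeaklyRegular (X Y : ModuleCat.{u} R) (rs : List R)
    (hX : IsWeaklyRegular X rs) (hY : ∀ r ∈ rs, ∀ y : Y, r • y = 0)
    (n i : ℕ) [HasProjectiveDimensionLT Y (n + 1)] (hi : n < i + rs.length) :
    IsZero (((Tor (ModuleCat.{u} R) i).obj X).obj Y) := by
  induction rs generalizing X i with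
  | nil =>
    obtain ⟨i, rfl⟩ : ∃ k, i = k + 1 := ⟨i - 1, by grind⟩
    have := hasProjectiveDimensionLT_of_ge Y (n + 1) (i + 1) (by grind)
    exact Functor.isZero_leftDerived_obj_of_hasProjectiveDimensionLT _ Y i
  | cons r rs ih =>
    rw [isWeaklyRegular_cons_iff] at hX
    refine isZero_Tor_of_isZero_Tor_quotSMulTop X Y r hX.1 (hY r (by simp)) i ?_
    exact ih (ModuleCat.of R (QuotSMulTop r X)) hX.2 (fun s hs => hY s (by simp [hs])) (i + 1)
      (by grind)

end Tor

lemma MvPolynomial.isWeaklyRegular_map_X {σ R : Type*} [CommRing R] {l : List σ} (hl : l.Nodup) :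
    IsWeaklyRegular (MvPolynomial σ R) (l.map (X : σ → MvPolynomial σ R)) := by
  rw [isWeaklyRegular_iff]
  intro i hi
  simp only [List.length_map] at hi
  have hspan : (Ideal.ofList ((l.map (X : σ → MvPolynomial σ R)).take i) •
      (⊤ : Submodule (MvPolynomial σ R) (MvPolynomial σ R))) =
      Ideal.span (X '' {j | j ∈ l.take i}) := by
    rw [smul_eq_mul, Ideal.mul_top, Ideal.ofList]
    congr 1
    ext p
    simp [← List.map_take]
  have hmem : l[i] ∉ l.take i := by
    intro h
    obtain ⟨k, hk, hk'⟩ := List.mem_take_iff_getElem.1 h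
    have := hl.getElem_inj_iff.1 hk'
    lia
  rw [isSMulRegular_quotient_iff_mem_of_smul_mem, hspan]
  intro p hp
  simp only [List.getElem_map, smul_eq_mul] at hp
  rw [mem_ideal_span_X_image] at hp ⊢
  intro m hm
  obtain ⟨j, hj, hj'⟩ := hp (m + Finsupp.single l[i] 1) (by
    rw [mem_support_iff, mul_comm, coeff_mul_X]
    exact mem_support_iff.1 hm)
  refine ⟨j, hj, ?_⟩
  have : l[i] ≠ j := fun h => hmem (h ▸ hj)
  simpa [Finsupp.single_apply, this] using hj'

end RegularSequence

/-- **Koszul regularity of regular sequences.**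
If `f₁, …, fₙ` is a regular sequence in a commutative ring `A`, and we regard `A` as an
algebra over the polynomial ring `P = ℤ[T₁,…,Tₙ]` via `Tᵢ ↦ fᵢ`, then
`Torᵢ^P (A, P/(T₁,…,Tₙ)) = 0` for all `i > 0`. -/
theorem tor_eq_zero_of_isRegular (A : Type) [CommRing A] (n : ℕ) (f : Fin n → A)
    (hf : RingTheory.Sequence.IsRegular A (List.ofFn f)) (i : ℕ) (hi : 0 < i) :
    letI : Algebra (MvPolynomial (Fin n) ℤ) A := (MvPolynomial.aeval f).toRingHom.toAlgebra
    IsZero (((Tor (ModuleCat (MvPolynomial (Fin n) ℤ)) i).obj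
        (ModuleCat.of (MvPolynomial (Fin n) ℤ) A)).obj
      (ModuleCat.of (MvPolynomial (Fin n) ℤ)
        (MvPolynomial (Fin n) ℤ ⧸
          Ideal.span (Set.range (MvPolynomial.X : Fin n → MvPolynomial (Fin n) ℤ))))) := by
  let : Algebra (MvPolynomial (Fin n) ℤ) A := (MvPolynomial.aeval f).toRingHom.toAlgebra
  let X : Fin n → MvPolynomial (Fin n) ℤ := MvPolynomial.X
  have hX (k : Fin n) : algebraMap (MvPolynomial (Fin n) ℤ) A (X k) = f k :=
    MvPolynomial.aeval_X f k
  have hA : RingTheory.Sequence.IsWeaklyRegular A (List.ofFn X) := by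
    rw [← RingTheory.Sequence.isWeaklyRegular_map_algebraMap_iff A A, List.map_ofFn]
    convert hf.toIsWeaklyRegular using 2
    exact funext hX
  have hP : RingTheory.Sequence.IsWeaklyRegular (MvPolynomial (Fin n) ℤ) (List.ofFn X) := by
    simpa [List.map_ofFn] using MvPolynomial.isWeaklyRegular_map_X (R := ℤ)
      (List.nodup_ofFn_ofInjective (Function.injective_id (α := Fin n)))
  have hspan : Ideal.ofList (List.ofFn X) •
      (⊤ : Submodule (MvPolynomial (Fin n) ℤ) (MvPolynomial (Fin n) ℤ)) =
        Ideal.span (Set.range X) := by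
    rw [smul_eq_mul, Ideal.mul_top, Ideal.ofList]
    congr 1
    ext p
    simp [List.mem_ofFn]
  have hdim := ModuleCat.hasProjectiveDimensionLT_quotient_of_isWeaklyRegular
    (ModuleCat.of (MvPolynomial (Fin n) ℤ) (MvPolynomial (Fin n) ℤ)) (List.ofFn X) hP 0
  rw [hspan, zero_add, List.length_ofFn] at hdim
  refine ModuleCat.isZero_Tor_of_isWeaklyRegular (ModuleCat.of _ A) (ModuleCat.of _ _) _ hA
    ?_ n i (by simpa)
  rintro r hr y
  obtain ⟨k, rfl⟩ := List.mem_ofFn.1 hr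
  obtain ⟨p, rfl⟩ := Ideal.Quotient.mk_surjective y
  exact Ideal.Quotient.eq_zero_iff_mem.2
    (Ideal.mul_mem_right p _ (Ideal.subset_span (Set.mem_range_self k)))
end

section
/- Let A be a commutative ring, f₁,…,fₙ ∈ A a regular sequence, and I = (f₁,…,fₙ). If F ∈ A[X₁,…,Xₙ] is a homogeneous polynomial of degree d such that F(f₁,…,fₙ) ∈ I^{d+1}, then every coefficient of F lies in I. (Regular sequences are quasi-regular.) -/
namespace MvPolynomial

variable {σ A : Type*} [CommRing A]

/-- The submodule of homogeneous polynomials of degree `d` involving only variables in `s`. -/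
noncomputable abbrev homogeneousSupported (A : Type*) [CommRing A] (s : Set σ) (d : ℕ) :
    Submodule A (MvPolynomial σ A) :=
  restrictSupport A {m | m.degree = d ∧ (m.support : Set σ) ⊆ s}

lemma mem_homogeneousSupported {s : Set σ} {d : ℕ} {F : MvPolynomial σ A} :
    F ∈ homogeneousSupported A s d ↔
      ∀ m, coeff m F ≠ 0 → m.degree = d ∧ ∀ i, i ∉ s → m i = 0 := by
  rw [mem_restrictSupport_iff]
  simp only [Set.subset_def, Set.mem_ofPred_eq, Finset.mem_coe, mem_support_iff,
    Finsupp.mem_support_iff, not_imp_comm (b := _ ∈ s)]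

lemma mul_X_mem_homogeneousSupported {s : Set σ} {d : ℕ} {F : MvPolynomial σ A} {i : σ}
    (hi : i ∈ s) (hF : F ∈ homogeneousSupported A s d) :
    F * X i ∈ homogeneousSupported A s (d + 1) := by
  classical
  rw [mem_homogeneousSupported] at hF ⊢
  intro m hm
  rw [coeff_mul_X'] at hm
  split_ifs at hm with him
  · obtain ⟨hd, hs⟩ := hF _ hm
    have hle : Finsupp.single i 1 ≤ m := by
      simpa [Nat.one_le_iff_ne_zero] using him
    refine ⟨?_, fun j hj => ?_⟩
    · rw [← tsub_add_cancel_of_le hle, map_add, hd, Finsupp.degree_single]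
    · have hji : i ≠ j := fun h => hj (h ▸ hi)
      simpa [Finsupp.single_eq_of_ne' hji] using hs j hj
  · exact absurd rfl hm

/-- Elements of `J * (fᵢ : i ∈ s) ^ d` are the values at `f` of degree `d` forms with coefficients
in `J`. -/
lemma exists_eval_eq_of_mem_mul_span_pow (f : σ → A) (s : Set σ) (J : Ideal A) (d : ℕ) {x : A}
    (hx : x ∈ J * Ideal.span (f '' s) ^ d) :
    ∃ F ∈ homogeneousSupported A s d, F ∈ J.map C ∧ eval f F = x := by
  classical
  induction d generalizing x with
  | zero =>
    refine ⟨C x, ?_, Ideal.mem_map_of_mem _ (by simpa using hx), eval_C x⟩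
    rw [mem_homogeneousSupported]
    intro m hm
    rw [coeff_C] at hm
    obtain rfl : 0 = m := by
      by_contra h
      exact hm (if_neg h)
    simp
  | succ d ih =>
    rw [pow_succ, ← mul_assoc] at hx
    refine Submodule.mul_induction_on hx (fun y hy z hz => ?_) (fun u v hu hv => ?_)
    · obtain ⟨F, hF, hFJ, rfl⟩ := ih hy
      induction hz using Submodule.span_induction with
      | mem z hz =>
        obtain ⟨i, hi, rfl⟩ := hz
        exact ⟨F * X i, mul_X_mem_homogeneousSupported hi hF, Ideal.mul_mem_right _ _ hFJ,
          by simp⟩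
      | zero => exact ⟨0, zero_mem _, zero_mem _, by simp⟩
      | add u v _ _ hu hv =>
        obtain ⟨G, hG, hGJ, hGu⟩ := hu
        obtain ⟨H, hH, hHJ, hHv⟩ := hv
        exact ⟨G + H, add_mem hG hH, add_mem hGJ hHJ, by rw [map_add, hGu, hHv, mul_add]⟩
      | smul c u _ hu =>
        obtain ⟨G, hG, hGJ, hGu⟩ := hu
        refine ⟨c • G, Submodule.smul_mem _ _ hG, Submodule.smul_of_tower_mem _ _ hGJ, ?_⟩
        rw [smul_eval, hGu, smul_eq_mul]
        ring
    · obtain ⟨G, hG, hGJ, hGu⟩ := hu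
      obtain ⟨H, hH, hHJ, hHv⟩ := hv
      exact ⟨G + H, add_mem hG hH, add_mem hGJ hHJ, by rw [map_add, hGu, hHv]⟩

lemma eval_mem_mul_span_pow (f : σ → A) {s : Set σ} {J : Ideal A} {d : ℕ}
    {F : MvPolynomial σ A} (hF : F ∈ homogeneousSupported A s d) (hFJ : F ∈ J.map C) :
    eval f F ∈ J * Ideal.span (f '' s) ^ d := by
  rw [eval_eq]
  refine sum_mem fun m hm => Ideal.mul_mem_mul (mem_map_C_iff.1 hFJ m) ?_
  obtain ⟨rfl, hs⟩ := mem_homogeneousSupported.1 hF m (mem_support_iff.1 hm)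
  rw [Finsupp.degree_apply, ← Finset.prod_pow_eq_pow_sum]
  refine Ideal.prod_mem_prod fun i hi => Ideal.pow_mem_pow (Ideal.subset_span ?_) _
  refine Set.mem_image_of_mem f ?_
  by_contra h
  exact Finsupp.mem_support_iff.1 hi (hs i h)

/-- The family `(fᵢ)` for `i ∈ s` is quasi-regular: a form of degree `d` whose value at `f` lies in
`I ^ (d + 1)` has all coefficients in `I`, where `I` is the ideal generated by the family. -/
def IsQuasiRegularOn (f : σ → A) (s : Set σ) : Prop :=
  ∀ d, ∀ F ∈ homogeneousSupported A s d, eval f F ∈ Ideal.span (f '' s) ^ (d + 1) →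
    F ∈ (Ideal.span (f '' s)).map C

lemma mem_map_C_of_coeff_eq_zero {f : σ → A} {I : Ideal A} {F : MvPolynomial σ A}
    (hF : ∀ m, coeff m F ≠ 0 → m = 0) (h : eval f F ∈ I) : F ∈ I.map C := by
  classical
  have hC : F = C (coeff 0 F) := by
    ext m
    rw [coeff_C]
    split_ifs with hm
    · rw [hm]
    · by_contra h0
      exact hm (hF m h0).symm
  rw [hC] at h ⊢
  rw [eval_C] at h
  exact Ideal.mem_map_of_mem _ h

lemma isQuasiRegularOn_empty (f : σ → A) : IsQuasiRegularOn f ∅ := fun d F hF h =>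
  mem_map_C_of_coeff_eq_zero
    (fun m hm => Finsupp.ext fun i => (mem_homogeneousSupported.1 hF m hm).2 i (by simp))
    (Ideal.pow_le_self d.succ_ne_zero h)

lemma IsQuasiRegularOn.mem_pow_of_mul_mem {f : σ → A} {s : Set σ} (h : IsQuasiRegularOn f s)
    {a : A} (ha : ∀ x, a * x ∈ Ideal.span (f '' s) → x ∈ Ideal.span (f '' s)) {d : ℕ} {x : A}
    (hx : a * x ∈ Ideal.span (f '' s) ^ d) : x ∈ Ideal.span (f '' s) ^ d := by
  induction d with
  | zero => simp
  | succ d ih =>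
    obtain ⟨G, hG, -, rfl⟩ := exists_eval_eq_of_mem_mul_span_pow f s ⊤ d
      (by simpa [Ideal.top_mul] using ih (Ideal.pow_le_pow_right d.le_succ hx))
    have haG := h d (a • G) (Submodule.smul_mem _ _ hG) (by rwa [smul_eval])
    rw [pow_succ']
    refine eval_mem_mul_span_pow f hG (mem_map_C_iff.2 fun m => ha _ ?_)
    simpa using mem_map_C_iff.1 haG m

lemma IsQuasiRegularOn.insert {f : σ → A} {s : Set σ} (h : IsQuasiRegularOn f s) {i : σ}
    (hi : ∀ x, f i * x ∈ Ideal.span (f '' s) → x ∈ Ideal.span (f '' s)) :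
    IsQuasiRegularOn f (insert i s) := by
  classical
  set I := Ideal.span (f '' Insert.insert i s)
  have hle : Ideal.span (f '' s) ≤ I := Ideal.span_mono (Set.image_mono (Set.subset_insert i s))
  have hfi : f i ∈ I := Ideal.subset_span ⟨i, Set.mem_insert i s, rfl⟩
  intro d
  induction d with
  | zero =>
    intro F hF hFI
    refine mem_map_C_of_coeff_eq_zero (fun m hm => ?_) (by simpa using hFI)
    exact (Finsupp.degree_eq_zero_iff m).1 (mem_homogeneousSupported.1 hF m hm).1
  | succ d ih =>
    intro F₀ hF₀ hF₀I
    rw [pow_succ'] at hF₀I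
    obtain ⟨K, hK, hKI, hKF⟩ := exists_eval_eq_of_mem_mul_span_pow f _ I (d + 1) hF₀I
    suffices F₀ - K ∈ I.map C by simpa using add_mem this hKI
    obtain ⟨F, hFdef⟩ : ∃ F, F = F₀ - K := ⟨_, rfl⟩
    have hF : F ∈ homogeneousSupported A (Insert.insert i s) (d + 1) :=
      hFdef ▸ sub_mem hF₀ hK
    have hF0 : eval f F = 0 := by rw [hFdef, map_sub, hKF, sub_self]
    rw [← hFdef]
    rw [mem_homogeneousSupported] at hF
    obtain ⟨H, hHdef⟩ : ∃ H, H = F.divMonomial (Finsupp.single i 1) := ⟨_, rfl⟩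
    obtain ⟨G, hGdef⟩ : ∃ G, G = F.modMonomial (Finsupp.single i 1) := ⟨_, rfl⟩
    have hGH : X i * H + G = F := by
      rw [hHdef, hGdef]
      exact divMonomial_add_modMonomial_single F i
    have hH : H ∈ homogeneousSupported A (Insert.insert i s) d := by
      rw [mem_homogeneousSupported]
      intro m hm
      rw [hHdef, coeff_divMonomial] at hm
      obtain ⟨hd, hs⟩ := hF _ hm
      rw [map_add, Finsupp.degree_single] at hd
      refine ⟨by omega, fun j hj => ?_⟩
      have := hs j hj
      rw [Finsupp.add_apply] at this
      omega
    have hG : G ∈ homogeneousSupported A s (d + 1) := by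
      rw [mem_homogeneousSupported]
      intro m hm
      by_cases hmi : Finsupp.single i 1 ≤ m
      · rw [hGdef, coeff_modMonomial_of_le _ hmi] at hm
        exact absurd rfl hm
      · rw [hGdef, coeff_modMonomial_of_not_le _ hmi] at hm
        obtain ⟨hd, hs⟩ := hF _ hm
        refine ⟨hd, fun j hj => ?_⟩
        by_cases hji : j = i
        · subst hji
          simpa [Nat.one_le_iff_ne_zero] using hmi
        · exact hs j (by simp [hji, hj])
    have heval : f i * eval f H + eval f G = 0 := by
      rw [← hF0, ← hGH, map_add, map_mul, eval_X]
    have hGmem : eval f G ∈ Ideal.span (f '' s) ^ (d + 1) := by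
      simpa [Ideal.top_mul] using
        eval_mem_mul_span_pow f (J := ⊤) hG (mem_map_C_iff.2 fun _ => Submodule.mem_top)
    have hHmem : eval f H ∈ Ideal.span (f '' s) ^ (d + 1) := by
      refine h.mem_pow_of_mul_mem hi ?_
      rw [eq_neg_of_add_eq_zero_left heval]
      exact neg_mem hGmem
    have hHI : H ∈ I.map C := ih H hH (Ideal.pow_right_mono hle _ hHmem)
    obtain ⟨L, hL, -, hLH⟩ := exists_eval_eq_of_mem_mul_span_pow f s ⊤ (d + 1)
      (by simpa [Ideal.top_mul] using hHmem)
    have hGL : G + f i • L ∈ (Ideal.span (f '' s)).map C := by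
      refine h (d + 1) _ (add_mem hG (Submodule.smul_mem _ _ hL)) ?_
      rw [map_add, smul_eval, hLH, add_comm (eval f G), heval]
      exact zero_mem _
    have hLI : f i • L ∈ I.map C := by
      rw [smul_eq_C_mul]
      exact Ideal.mul_mem_right _ _ (Ideal.mem_map_of_mem _ hfi)
    have hGI : G ∈ I.map C := by
      simpa using sub_mem (Ideal.map_mono hle hGL) hLI
    rw [← hGH]
    exact add_mem (Ideal.mul_mem_left _ _ hHI) hGI

end MvPolynomial

lemma Ideal.ofList_take_ofFn {A : Type*} [CommRing A] {n : ℕ} (f : Fin n → A) (k : ℕ) :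
    Ideal.ofList ((List.ofFn f).take k) = Ideal.span (f '' {i | (i : ℕ) < k}) := by
  unfold Ideal.ofList
  congr 1
  ext x
  simp only [Set.mem_ofPred_eq, List.mem_take_iff_getElem, List.getElem_ofFn, List.length_ofFn,
    Set.mem_image, lt_min_iff]
  constructor
  · rintro ⟨j, hj, rfl⟩
    exact ⟨⟨j, hj.2⟩, hj.1, rfl⟩
  · rintro ⟨i, hi, rfl⟩
    exact ⟨i, ⟨hi, i.2⟩, rfl⟩

lemma RingTheory.Sequence.IsWeaklyRegular.mem_span_of_mul_mem {A : Type*} [CommRing A] {n : ℕ}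
    {f : Fin n → A} (hf : IsWeaklyRegular A (List.ofFn f)) (k : Fin n) {x : A}
    (hx : f k * x ∈ Ideal.span (f '' {i | i < k})) : x ∈ Ideal.span (f '' {i | i < k}) := by
  have hreg := hf.regular_mod_prev k (by simp)
  rw [isSMulRegular_quotient_iff_mem_of_smul_mem] at hreg
  have := hreg x
  simp only [List.getElem_ofFn, Ideal.ofList_take_ofFn, smul_eq_mul, Ideal.mul_top] at this
  exact this hx

lemma RingTheory.Sequence.IsWeaklyRegular.isQuasiRegularOn {A : Type*} [CommRing A] {n : ℕ}
    {f : Fin n → A} (hf : IsWeaklyRegular A (List.ofFn f)) {k : ℕ} (hk : k ≤ n) :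
    MvPolynomial.IsQuasiRegularOn f {i | (i : ℕ) < k} := by
  induction k with
  | zero => simpa using MvPolynomial.isQuasiRegularOn_empty f
  | succ k ih =>
    have hins : {i : Fin n | (i : ℕ) < k + 1} = insert ⟨k, hk⟩ {i : Fin n | (i : ℕ) < k} := by
      ext i
      simp only [Set.mem_ofPred_eq, Set.mem_insert_iff, Fin.ext_iff]
      omega
    rw [hins]
    exact (ih (by omega)).insert fun x hx => hf.mem_span_of_mul_mem ⟨k, hk⟩ hx


/-- **Regular sequences are quasi-regular.**
Let `f₁, …, fₙ` be a regular sequence in a commutative ring `A` and `I = (f₁, …, fₙ)`.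
If `F ∈ A[X₁,…,Xₙ]` is homogeneous of degree `d` and `F(f₁,…,fₙ) ∈ I^(d+1)`, then every
coefficient of `F` lies in `I`. -/
theorem coeff_mem_of_isRegular_of_eval_mem_pow (A : Type*) [CommRing A] (n : ℕ)
    (f : Fin n → A) (hf : RingTheory.Sequence.IsRegular A (List.ofFn f))
    (d : ℕ) (F : MvPolynomial (Fin n) A) (hF : F.IsHomogeneous d)
    (hFf : MvPolynomial.eval f F ∈ Ideal.span (Set.range f) ^ (d + 1)) :
    ∀ m : Fin n →₀ ℕ, MvPolynomial.coeff m F ∈ Ideal.span (Set.range f) := by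
  have hq := hf.toIsWeaklyRegular.isQuasiRegularOn le_rfl
  have huniv : {i : Fin n | (i : ℕ) < n} = Set.univ := by
    ext i
    simp
  rw [huniv] at hq
  rw [← Set.image_univ] at hFf ⊢
  refine MvPolynomial.mem_map_C_iff.1 (hq d F ?_ hFf)
  rw [MvPolynomial.mem_homogeneousSupported]
  refine fun m hm => ⟨?_, by simp⟩
  rw [Finsupp.degree_eq_weight_one]
  exact hF hm
end

section
/- Let R be a nontrivial commutative ring, n ≥ 1, and fix k with 1 ≤ k ≤ n. In the polynomial ring B = R[T₁,…,Tₙ][X_r : r ∈ {1,…,n}, r ≠ k] (polynomial ring in the n variables Tᵢ and the n−1 additional variables X_r), the sequence (T_k·X_r − T_r)_{r ≠ k}, ordered by increasing r, is a regular sequence. (These are the defining relations of the standard chart Spec A_k, A_k = ℤ[T₁/T_k,…,Tₙ/T_k,T_k], of the blow-up of affine n-space at the origin.) -/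
open MvPolynomial

namespace BlowupChart

variable (R : Type*) [CommRing R] {ι : Type*} {k : ι}

/-- The relation `T_k · X_r − T_r` of the `k`-th chart of the blow-up. -/
noncomputable def relation (r : {r : ι // r ≠ k}) :
    MvPolynomial {r : ι // r ≠ k} (MvPolynomial ι R) :=
  C (X k) * X r - C (X r.1)

variable {R}

/-- The `R`-algebra endomorphism of `R[T][X]` fixing every `X_r` and sending `T_i` to `g i`. -/
noncomputable def substT (g : ι → MvPolynomial {r : ι // r ≠ k} (MvPolynomial ι R)) :
    MvPolynomial {r : ι // r ≠ k} (MvPolynomial ι R) →+*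
      MvPolynomial {r : ι // r ≠ k} (MvPolynomial ι R) :=
  eval₂Hom (eval₂Hom (C.comp C) g) X

section substT

variable (g : ι → MvPolynomial {r : ι // r ≠ k} (MvPolynomial ι R))

@[simp] lemma substT_X (r : {r : ι // r ≠ k}) : substT g (X r) = X r := by
  simp [substT]

@[simp] lemma substT_C_X (i : ι) : substT g (C (X i)) = g i := by
  simp [substT]

@[simp] lemma substT_C_C (a : R) : substT g (C (C a)) = C (C a) := by
  simp [substT]

end substT

lemma eq_zero_of_relation_mul_eq_zero (r : {r : ι // r ≠ k})
    {p : MvPolynomial {r : ι // r ≠ k} (MvPolynomial ι R)} (hp : relation R r * p = 0) :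
    p = 0 := by
  classical
  -- The involution `T_r ↦ T_k X_r - T_r` exchanges the relation and the variable `T_r`.
  let ψ := substT (R := R) (k := k) fun i => if i = r.1 then relation R r else C (X i)
  have hψr : ψ (relation R r) = C (X r.1) := by
    simp [ψ, relation, r.2.symm]
  have hψ : ψ.comp ψ = RingHom.id _ := by
    refine ringHom_ext' (ringHom_ext (fun a => by simp [ψ]) fun i => ?_) fun s => by simp [ψ]
    by_cases hi : i = r.1
    · subst hi
      simpa [ψ] using hψr
    · simp [ψ, hi]
  have hp' : C (X r.1) * ψ p = 0 := by
    rw [← hψr, ← map_mul, hp, map_zero]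
  have hz : ψ p = 0 := by
    ext1 m
    have hm := congrArg (coeff m) hp'
    rw [coeff_C_mul, coeff_zero] at hm
    rw [coeff_zero]
    ext1 d
    exact (coeff_X_mul d r.1 _).symm.trans (congrArg (coeff _) hm)
  calc
    p = ψ (ψ p) := (DFunLike.congr_fun hψ p).symm
    _ = 0 := by rw [hz, map_zero]

lemma isSMulRegular_quotient_relation (L : List {r : ι // r ≠ k}) {r : {r : ι // r ≠ k}}
    (hr : r ∉ L) :
    IsSMulRegular (MvPolynomial {r : ι // r ≠ k} (MvPolynomial ι R) ⧸
      (Ideal.ofList (L.map (relation R)) • ⊤ :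
        Ideal (MvPolynomial {r : ι // r ≠ k} (MvPolynomial ι R))))
      (relation R r) := by
  classical
  rw [smul_eq_mul, Ideal.mul_top]
  set I : Ideal (MvPolynomial {r : ι // r ≠ k} (MvPolynomial ι R)) :=
    Ideal.ofList (L.map (relation R))
  -- `I` is the kernel of the substitution `T_s ↦ T_k X_s` for `s ∈ L`, which fixes `relation r`.
  let φ := substT (R := R) (k := k) fun i =>
    if h : ∃ hi : i ≠ k, ⟨i, hi⟩ ∈ L then C (X k) * X ⟨i, h.1⟩ else C (X i)
  have hφI : I ≤ RingHom.ker φ := by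
    refine Ideal.span_le.mpr fun x hx => ?_
    obtain ⟨s, hs, rfl⟩ := List.mem_map.mp hx
    simp [φ, relation, RingHom.mem_ker, s.2, hs]
  have hφ : (Ideal.Quotient.mk I).comp φ = Ideal.Quotient.mk I := by
    refine ringHom_ext' (ringHom_ext (fun a => by simp [φ]) fun i => ?_) fun s => by simp [φ]
    by_cases h : ∃ hi : i ≠ k, ⟨i, hi⟩ ∈ L
    · have : relation R ⟨i, h.1⟩ ∈ I := Ideal.subset_span (List.mem_map_of_mem h.2)
      simpa [φ, h] using Ideal.Quotient.eq.mpr this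
    · simp [φ, h]
  have hφr : φ (relation R r) = relation R r := by
    simp [φ, relation, hr]
  rw [isSMulRegular_iff_right_eq_zero_of_smul]
  intro x hx
  obtain ⟨p, rfl⟩ := Ideal.Quotient.mk_surjective x
  have hmem : relation R r * p ∈ I := Ideal.Quotient.eq_zero_iff_mem.mp hx
  have hzero : relation R r * φ p = 0 := by
    simpa [hφr] using hφI hmem
  have hp : φ p = 0 := eq_zero_of_relation_mul_eq_zero r hzero
  simpa [hp] using (DFunLike.congr_fun hφ p).symm

lemma isRegular_map_relation [Nontrivial R] {L : List {r : ι // r ≠ k}} (hL : L.Nodup) :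
    RingTheory.Sequence.IsRegular (MvPolynomial {r : ι // r ≠ k} (MvPolynomial ι R))
      (L.map (relation R)) where
  regular_mod_prev i hi := by
    rw [← List.map_take, List.getElem_map]
    refine isSMulRegular_quotient_relation _ fun h => ?_
    obtain ⟨j, hj, hji⟩ := List.mem_take_iff_getElem.mp h
    have := hL.getElem_inj_iff.mp hji
    omega
  top_ne_smul h := by
    rw [smul_eq_mul, Ideal.mul_top] at h
    have hle : Ideal.ofList (L.map (relation R)) ≤ RingHom.ker
        ((constantCoeff (R := R) (σ := ι)).comp
          (constantCoeff (σ := {r : ι // r ≠ k}))) := by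
      refine Ideal.span_le.mpr fun x hx => ?_
      obtain ⟨s, -, rfl⟩ := List.mem_map.mp hx
      simp [relation, RingHom.mem_ker]
    exact RingHom.ker_ne_top _ (top_le_iff.mp (h.le.trans hle))

end BlowupChart

/-- In the polynomial ring `B = R[T₁,…,Tₙ][Xᵣ : r ≠ k]` over a nontrivial commutative
ring `R`, the sequence `(T_k · X_r − T_r)_{r ≠ k}` (ordered by increasing `r`) is a
regular sequence.  These are the defining relations of the standard chart
`Spec ℤ[T₁/T_k, …, Tₙ/T_k, T_k]` of the blow-up of affine `n`-space at the origin. -/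
theorem isRegular_blowup_chart_relations (R : Type*) [CommRing R] [Nontrivial R]
    (n : ℕ) (k : Fin n) :
    RingTheory.Sequence.IsRegular
      (MvPolynomial {r : Fin n // r ≠ k} (MvPolynomial (Fin n) R))
      (((List.finRange n).filterMap fun r =>
          if h : r ≠ k then
            some (C (X k) * X (⟨r, h⟩ : {r : Fin n // r ≠ k}) - C (X r))
          else none :
        List (MvPolynomial {r : Fin n // r ≠ k} (MvPolynomial (Fin n) R)))) := by
  have hL : ((List.finRange n).filterMap fun r =>
      if h : r ≠ k then some (⟨r, h⟩ : {r : Fin n // r ≠ k}) else none).Nodup := by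
    refine (List.nodup_finRange n).filterMap fun a b c ha hb => ?_
    simp only [Option.mem_def, Option.dite_none_right_eq_some, Option.some.injEq] at ha hb
    obtain ⟨_, rfl⟩ := ha
    obtain ⟨_, hb⟩ := hb
    exact (congrArg Subtype.val hb).symm
  convert BlowupChart.isRegular_map_relation (R := R) hL using 1
  rw [List.map_filterMap]
  congr 1
  funext r
  split_ifs <;> rfl
end

section
/- Let R be a commutative ring, n ≥ 1, and fix k with 1 ≤ k ≤ n. Let φ be the R[T₁,…,Tₙ]-algebra homomorphism from the polynomial ring R[T₁,…,Tₙ][X_r : r ≠ k] to the localization R[T₁,…,Tₙ][T_k^{-1}] of R[T₁,…,Tₙ] away from T_k, determined by X_r ↦ T_r·T_k^{-1}. Then the kernel of φ is exactly the ideal generated by the elements T_k·X_r − T_r for r ≠ k. (This identifies R[T₁,…,Tₙ][X_r : r ≠ k]/(T_kX_r − T_r) with the chart A_k = R[T₁/T_k,…,Tₙ/T_k,T_k] of the blow-up of affine n-space at the origin.) -/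
open MvPolynomial

section BlowupChart

variable {σ R : Type*} [CommRing R] [DecidableEq σ] (k : σ)

/-- The substitution `T_k ↦ T_k`, `Tᵣ ↦ T_k · Tᵣ` for `r ≠ k` on `R[T]`. -/
noncomputable def chartSubst : MvPolynomial σ R →ₐ[R] MvPolynomial σ R :=
  aeval fun i => if i = k then X k else X k * X i

/-- The parametrization of the chart: it is `chartSubst k` on coefficients and maps `Xᵣ ↦ Tᵣ`. -/
noncomputable def chartParam :
    MvPolynomial {r : σ // r ≠ k} (MvPolynomial σ R) →+* MvPolynomial σ R :=
  eval₂Hom (chartSubst k).toRingHom fun r => X r.1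

/-- The map `T_k ↦ T_k`, `Tᵣ ↦ Xᵣ` for `r ≠ k`, a section of `chartParam k`. -/
noncomputable def chartSection :
    MvPolynomial σ R →+* MvPolynomial {r : σ // r ≠ k} (MvPolynomial σ R) :=
  eval₂Hom (C.comp C) fun i => if h : i = k then C (X k) else X ⟨i, h⟩

@[simp]
lemma chartSubst_X_self : chartSubst k (X k : MvPolynomial σ R) = X k := by
  simp [chartSubst]

lemma chartSubst_X_of_ne {r : σ} (hr : r ≠ k) :
    chartSubst k (X r : MvPolynomial σ R) = X k * X r := by
  simp [chartSubst, hr]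

/-- Modulo the relations `T_k Xᵣ = Tᵣ`, the section inverts the parametrization. -/
lemma mk_comp_chartSection_comp_chartParam
    (I : Ideal (MvPolynomial {r : σ // r ≠ k} (MvPolynomial σ R)))
    (hI : ∀ r : {r : σ // r ≠ k}, C (X k) * X r - C (X r.1) ∈ I) :
    ((Ideal.Quotient.mk I).comp (chartSection k)).comp (chartParam k) = Ideal.Quotient.mk I := by
  refine MvPolynomial.ringHom_ext' (MvPolynomial.ringHom_ext' ?_ fun i => ?_) fun r => ?_
  · ext a
    simp [chartSection, chartParam, chartSubst, MvPolynomial.algebraMap_eq]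
  · by_cases h : i = k
    · subst h
      simp [chartSection, chartParam]
    · simpa [chartSection, chartParam, chartSubst_X_of_ne k h, h] using
        Ideal.Quotient.eq.mpr (hI ⟨i, h⟩)
  · simp [chartSection, chartParam, r.2]

variable {S : Type*} [CommRing S] [Algebra (MvPolynomial σ R) S]
  [IsLocalization.Away (X k : MvPolynomial σ R) S]

/-- If a polynomial vanishes at the fractions `Tᵣ / T_k`, then its pullback along
the parametrization of the chart vanishes. -/
lemma chartParam_eq_zero_of_aeval_eq_zero
    {f : MvPolynomial {r : σ // r ≠ k} (MvPolynomial σ R)}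
    (hf : aeval (fun r : {r : σ // r ≠ k} => algebraMap (MvPolynomial σ R) S (X r.1) *
      IsLocalization.Away.invSelf (S := S) (X k : MvPolynomial σ R)) f = 0) :
    chartParam k f = 0 := by
  have hu : IsUnit (((algebraMap (MvPolynomial σ R) S).comp (chartSubst k).toRingHom) (X k)) := by
    simpa using IsLocalization.Away.algebraMap_isUnit (S := S) (X k : MvPolynomial σ R)
  let ψ : S →+* S := IsLocalization.Away.lift (X k : MvPolynomial σ R) hu
  have hψ (p : MvPolynomial σ R) :
      ψ (algebraMap _ S p) = algebraMap _ S (chartSubst k p) :=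
    IsLocalization.Away.lift_eq _ hu p
  have hinv : algebraMap _ S (X k : MvPolynomial σ R) *
      IsLocalization.Away.invSelf (S := S) (X k : MvPolynomial σ R) = 1 :=
    IsLocalization.Away.mul_invSelf _
  have hψinv : algebraMap _ S (X k : MvPolynomial σ R) *
      ψ (IsLocalization.Away.invSelf (S := S) (X k : MvPolynomial σ R)) = 1 := by
    rw [← map_one ψ, ← hinv, map_mul, hψ, chartSubst_X_self]
  have hcomp : ψ.comp (aeval (fun r : {r : σ // r ≠ k} =>
      algebraMap (MvPolynomial σ R) S (X r.1) *
        IsLocalization.Away.invSelf (S := S) (X k : MvPolynomial σ R))).toRingHom =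
      (algebraMap (MvPolynomial σ R) S).comp (chartParam k) := by
    refine MvPolynomial.ringHom_ext (fun p => ?_) fun r => ?_
    · simp [chartParam, hψ]
    · simp only [AlgHom.toRingHom_eq_coe, RingHom.comp_apply, RingHom.coe_coe, aeval_X, map_mul,
        hψ, chartSubst_X_of_ne k r.2, chartParam, coe_eval₂Hom, eval₂_X]
      linear_combination algebraMap (MvPolynomial σ R) S (X r.1) * hψinv
  apply IsLocalization.injective S
    (M := Submonoid.powers (X k : MvPolynomial σ R))
    (Submonoid.powers_le.mpr isRegular_X.mem_nonZeroDivisors)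
  have := congrArg (fun g => g f) hcomp
  simpa [hf] using this.symm

end BlowupChart

/-- Let `P = R[T₁,…,Tₙ]` and let `φ` be the `P`-algebra homomorphism
`P[Xᵣ : r ≠ k] → P[T_k⁻¹]` determined by `Xᵣ ↦ Tᵣ · T_k⁻¹`.  Then the kernel of `φ` is
exactly the ideal generated by the elements `T_k·Xᵣ − Tᵣ` for `r ≠ k`.  This identifies
`P[Xᵣ : r ≠ k]/(T_k Xᵣ − Tᵣ)` with the chart `R[T₁/T_k, …, Tₙ/T_k, T_k]` of the blow-up
of affine `n`-space at the origin. -/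
theorem ker_blowup_chart_eval (R : Type*) [CommRing R] (n : ℕ) (k : Fin n) :
    RingHom.ker (MvPolynomial.aeval (R := MvPolynomial (Fin n) R)
        (fun r : {r : Fin n // r ≠ k} =>
          algebraMap (MvPolynomial (Fin n) R)
              (Localization.Away (X k : MvPolynomial (Fin n) R)) (X r.1) *
            IsLocalization.Away.invSelf
              (S := Localization.Away (X k : MvPolynomial (Fin n) R))
              (X k : MvPolynomial (Fin n) R))).toRingHom =
      Ideal.span (Set.range fun r : {r : Fin n // r ≠ k} =>
        (C (X k) * X r - C (X r.1) :
          MvPolynomial {r : Fin n // r ≠ k} (MvPolynomial (Fin n) R))) := by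
  apply le_antisymm
  · intro f hf
    have h := congrArg (fun g => g f) (mk_comp_chartSection_comp_chartParam k
      (Ideal.span (Set.range fun r : {r : Fin n // r ≠ k} =>
        (C (X k) * X r - C (X r.1) :
          MvPolynomial {r : Fin n // r ≠ k} (MvPolynomial (Fin n) R))))
      fun r => Ideal.subset_span ⟨r, rfl⟩)
    rw [← Ideal.Quotient.eq_zero_iff_mem, ← h]
    simp [chartParam_eq_zero_of_aeval_eq_zero k hf]
  · rw [Ideal.span_le]
    rintro _ ⟨r, rfl⟩
    have hinv := IsLocalization.Away.mul_invSelf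
      (S := Localization.Away (X k : MvPolynomial (Fin n) R)) (X k : MvPolynomial (Fin n) R)
    simp only [SetLike.mem_coe, RingHom.mem_ker, AlgHom.toRingHom_eq_coe, RingHom.coe_coe,
      map_sub, map_mul, algHom_C, aeval_X]
    linear_combination algebraMap (MvPolynomial (Fin n) R)
      (Localization.Away (X k : MvPolynomial (Fin n) R)) (X r.1) * hinv
end

section
/- Let R be a commutative ring, and let A and B be smooth R-algebras (i.e. formally smooth and of finite presentation over R). Let f : A → B be a surjective R-algebra homomorphism with kernel I. Then the conormal module I/I² is a finitely generated projective B-module. (This is the classical content of the fact that a closed immersion between schemes smooth over a base is a regular, i.e. quasi-smooth, immersion.) -/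
universe u

/-- If `A → B` is a surjection of smooth `R`-algebras with kernel `I`, then `I/I²` is a direct
summand of the finite projective `B`-module `B ⊗[A] Ω[A⁄R]`. -/
theorem finite_and_projective_cotangent_ker_algebraMap (R A B : Type u) [CommRing R]
    [CommRing A] [CommRing B] [Algebra R A] [Algebra R B] [Algebra A B] [IsScalarTower R A B]
    [Algebra.Smooth R A] [Algebra.FormallySmooth R B]
    (hf : Function.Surjective (algebraMap A B))
    [Module B (RingHom.ker (algebraMap A B)).Cotangent]
    [IsScalarTower A B (RingHom.ker (algebraMap A B)).Cotangent] :
    Module.Finite B (RingHom.ker (algebraMap A B)).Cotangent ∧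
      Module.Projective B (RingHom.ker (algebraMap A B)).Cotangent := by
  obtain ⟨l, hl⟩ := (Algebra.FormallySmooth.iff_split_injection (R := R) hf).mp inferInstance
  let r := l.extendScalarsOfSurjective hf
  let i := (KaehlerDifferential.kerCotangentToTensor R A B).extendScalarsOfSurjective hf
  have hri : r ∘ₗ i = LinearMap.id := LinearMap.ext fun x ↦ LinearMap.congr_fun hl x
  exact ⟨.of_surjective r (LinearMap.surjective_of_comp_eq_id i r hri), .of_split i r hri⟩

/-- Let `A` and `B` be smooth `R`-algebras and `f : A → B` a surjective `R`-algebra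
homomorphism with kernel `I`.  Then the conormal module `I/I²` is a finitely generated
projective `B`-module (where `B` acts on `I/I²` through the isomorphism
`A/I ≃ B` induced by `f`). -/
theorem cotangent_finite_projective_of_smooth (R A B : Type u) [CommRing R] [CommRing A]
    [CommRing B] [Algebra R A] [Algebra R B] [Algebra.Smooth R A] [Algebra.Smooth R B]
    (f : A →ₐ[R] B) (hf : Function.Surjective f) :
    letI : Module B (RingHom.ker f.toRingHom).Cotangent :=
      Module.compHom _ (RingHom.quotientKerEquivOfSurjective (f := f.toRingHom)
        hf).symm.toRingHom
    Module.Finite B (RingHom.ker f.toRingHom).Cotangent ∧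
      Module.Projective B (RingHom.ker f.toRingHom).Cotangent := by
  let : Algebra A B := f.toRingHom.toAlgebra
  let : Module B (RingHom.ker f.toRingHom).Cotangent :=
    Module.compHom _ (RingHom.quotientKerEquivOfSurjective (f := f.toRingHom)
      hf).symm.toRingHom
  have : IsScalarTower R A B := .of_algebraMap_eq' f.comp_algebraMap.symm
  have : IsScalarTower A B (RingHom.ker (algebraMap A B)).Cotangent := by
    refine .of_algebraMap_smul fun a x ↦ ?_
    have ha : (RingHom.quotientKerEquivOfSurjective (f := f.toRingHom) hf).symm (f a) =
        Ideal.Quotient.mk _ a :=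
      (RingEquiv.symm_apply_eq _).mpr rfl
    change (RingHom.quotientKerEquivOfSurjective (f := f.toRingHom) hf).symm (f a) • x = a • x
    rw [ha]
    exact algebraMap_smul (A ⧸ RingHom.ker f.toRingHom) a x
  exact finite_and_projective_cotangent_ker_algebraMap R A B hf
end

section
/- Let R be a commutative ring, A an R-algebra, I ⊂ A an ideal, and B = A/I. If B is formally smooth over R, then the conormal sequence 0 → I/I² → B ⊗_A Ω_{A/R} → Ω_{B/R} → 0 is a short exact sequence of B-modules, and it is split: the map I/I² → B ⊗_A Ω_{A/R}, induced by x ↦ 1 ⊗ dx, is a split injection. -/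
open TensorProduct

universe u

/-- If `S` is formally smooth over `R`, then for every surjection `P → S` of `R`-algebras with
kernel `I`, the map `I/I² → S ⊗[P] Ω[P⁄R]` has a `P`-linear retraction. No smoothness of `P` is
needed. -/
theorem exists_retraction_kerCotangentToTensor_of_formallySmooth {R P S : Type*}
    [CommRing R] [CommRing P] [CommRing S] [Algebra R P] [Algebra P S] [Algebra R S]
    [IsScalarTower R P S] [Algebra.FormallySmooth R S]
    (hf : Function.Surjective (algebraMap P S)) :
    ∃ l : S ⊗[P] Ω[P⁄R] →ₗ[P] (RingHom.ker (algebraMap P S)).Cotangent,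
      l ∘ₗ KaehlerDifferential.kerCotangentToTensor R P S = LinearMap.id := by
  let f := (IsScalarTower.toAlgHom R P S).kerSquareLift
  have hsurj : Function.Surjective f := fun s ↦ (hf s).imp' (Ideal.Quotient.mk _) fun _ h ↦ h
  have hnil : IsNilpotent (RingHom.ker f.toRingHom) :=
    ⟨2, by rw [AlgHom.ker_kerSquareLift]; exact Ideal.cotangentIdeal_square _⟩
  let l := (retractionKerCotangentToTensorEquivSection hf).symm
    ⟨_, Algebra.FormallySmooth.comp_liftOfSurjective (AlgHom.id R S) f hsurj hnil⟩
  exact ⟨l.1, l.2⟩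

/-- **The split conormal sequence of a formally smooth quotient.**
Let `A` be an `R`-algebra, `I ⊆ A` an ideal and `B = A ⧸ I`.  If `B` is formally smooth
over `R`, then the conormal sequence `0 → I/I² → B ⊗[A] Ω[A⁄R] → Ω[B⁄R] → 0` is a short
exact sequence, and it is split: the first map `I/I² → B ⊗[A] Ω[A⁄R]`, induced by
`x ↦ 1 ⊗ dx`, is a split injection. -/
theorem conormal_sequence_split_exact_of_formallySmooth (R : Type u) (A : Type u)
    [CommRing R] [CommRing A] [Algebra R A] (I : Ideal A)
    [Algebra.FormallySmooth R (A ⧸ I)] :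
    Function.Injective (KaehlerDifferential.kerCotangentToTensor R A (A ⧸ I)) ∧
    Function.Exact (KaehlerDifferential.kerCotangentToTensor R A (A ⧸ I))
      (KaehlerDifferential.mapBaseChange R A (A ⧸ I)) ∧
    Function.Surjective (KaehlerDifferential.mapBaseChange R A (A ⧸ I)) ∧
    ∃ l : (A ⧸ I) ⊗[A] Ω[A⁄R] →ₗ[A] (RingHom.ker (algebraMap A (A ⧸ I))).Cotangent,
      l ∘ₗ KaehlerDifferential.kerCotangentToTensor R A (A ⧸ I) = LinearMap.id := by
  have hsurj : Function.Surjective (algebraMap A (A ⧸ I)) := Ideal.Quotient.mk_surjective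
  obtain ⟨l, hl⟩ := exists_retraction_kerCotangentToTensor_of_formallySmooth (R := R) hsurj
  exact ⟨Function.LeftInverse.injective (LinearMap.congr_fun hl),
    KaehlerDifferential.exact_kerCotangentToTensor_mapBaseChange R A (A ⧸ I) hsurj,
    KaehlerDifferential.mapBaseChange_surjective R A (A ⧸ I) hsurj, l, hl⟩
end
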